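/- Let N ≥ 1, let p ≥ 4 and q ≥ 4 be even, let g ∈ ℝ, and for t ∈ ℝ^p with t_p < 0 and t̃ ∈ ℝ^q with t̃_q < 0 define the two-matrix model partition function Z_N(t,t̃) := (1/N!) ∫_{ℝ^N}∫_{ℝ^N} Δ(λ_1,…,λ_N) Δ(μ_1,…,μ_N) ∏_{a=1}^N exp( Σ_{k=1}^p t_k λ_a^k + Σ_{s=1}^q t̃_s μ_a^s + g λ_a μ_a ) dλ dμ. Then Z_N is smooth on { t_p < 0, t̃_q < 0 } and satisfies the two-matrix string equation: Σ_{s=2}^q s t̃_s ∂Z_N/∂t̃_{s−1} + g ∂Z_N/∂t_1 + N t̃_1 Z_N = 0. -/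

import Mathlib

open MeasureTheory

/-- The Vandermonde product `Δ(l₁,…,l_N) = ∏_{j<i} (l_i − l_j)`. -/
noncomputable def vdm {N : ℕ} (l : Fin N → ℝ) : ℝ :=
  ∏ i : Fin N, ∏ j ∈ Finset.Ioi i, (l j - l i)

/-!
As a function of its couplings, `Z_N` is a Laplace transform `x ↦ ∫ exp (φ_y x) w(y) dy`, where
`w` collects the Vandermonde products and the interaction. If the integral still converges after
multiplying the integrand by `exp (ε ‖φ_y‖)` for some `ε > 0`, then it does so near `x`, and it may
be differentiated under the integral sign as often as one likes, because the factors `‖φ_y‖`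
produced by differentiation are absorbed by `exp (ε ‖φ_y‖)`. Stable couplings have such a margin:
their leading monomials dominate `ε ‖φ_y‖`, the interaction and the Vandermonde products,
leaving a Gaussian bound.

For the string equation, translate all `μ_a` simultaneously. The derivative of the integrand
along this translation integrates to zero. It does not see the Vandermonde products, and it changes
the exponent by `∑ a, (Ṽ' (μ_a) + g λ_a)`, which is `N t̃_1` plus the derivative of the exponent
along `g ∂/∂t_1 + ∑_{s ≥ 2} s t̃_s ∂/∂t̃_{s-1}`.
-/

section Laplace

open Metric

variable {Y : Type*} [MeasurableSpace Y] {μ : Measure Y}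
  {E F : Type*} [NormedAddCommGroup E] [NormedSpace ℝ E] [NormedAddCommGroup F] [NormedSpace ℝ F]
  {φ : Y → E →L[ℝ] ℝ} {w : Y → F}

/-- The vector-valued Laplace transform `x ↦ ∫ exp (φ_y x) w(y) dμ(y)` of the density `w`, where
the exponents form a family `φ` of continuous linear functionals. -/
noncomputable def laplaceIntegral (μ : Measure Y) (φ : Y → E →L[ℝ] ℝ) (w : Y → F) (x : E) : F :=
  ∫ y, Real.exp (φ y x) • w y ∂μ

/-- The parameters `x` at which `laplaceIntegral μ φ w` converges with room to spare. Asking for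
the factor `exp (ε ‖φ_y‖)` controls a whole ball around `x` and all derivatives there. -/
def laplaceDomain (μ : Measure Y) (φ : Y → E →L[ℝ] ℝ) (w : Y → F) : Set E :=
  {x | ∃ ε > 0, Integrable (fun y ↦ Real.exp (φ y x + ε * ‖φ y‖) • w y) μ}

theorem norm_exp_smul_le_of_dist_add_le (L : E →L[ℝ] ℝ) (v : F) {x x' : E} {ε ε' : ℝ}
    (h : dist x' x + ε' ≤ ε) :
    ‖Real.exp (L x' + ε' * ‖L‖) • v‖ ≤ ‖Real.exp (L x + ε * ‖L‖) • v‖ := by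
  have hL : L x' - L x ≤ ‖L‖ * dist x' x := by
    rw [← map_sub, dist_eq_norm]
    exact (le_abs_self _).trans (L.le_opNorm _)
  simp only [norm_smul, Real.norm_eq_abs, Real.abs_exp]
  refine mul_le_mul_of_nonneg_right (Real.exp_le_exp.2 ?_) (norm_nonneg v)
  linarith [mul_le_mul_of_nonneg_left h (norm_nonneg L)]

-- The factor `‖L‖` is absorbed by `exp ((ε - ε') ‖L‖)`.
theorem norm_exp_smul_smulRight_le (L : E →L[ℝ] ℝ) (v : F) (x : E) {ε ε' : ℝ} (h : ε' < ε) :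
    ‖Real.exp (L x + ε' * ‖L‖) • L.smulRight v‖ ≤
      (ε - ε')⁻¹ * ‖Real.exp (L x + ε * ‖L‖) • v‖ := by
  have hε : 0 < ε - ε' := sub_pos.2 h
  have hL : ‖L‖ ≤ (ε - ε')⁻¹ * Real.exp ((ε - ε') * ‖L‖) := by
    rw [le_inv_mul_iff₀ hε]
    linarith [Real.add_one_le_exp ((ε - ε') * ‖L‖)]
  simp only [norm_smul, Real.norm_eq_abs, Real.abs_exp, ContinuousLinearMap.norm_smulRight_apply]
  calc Real.exp (L x + ε' * ‖L‖) * (‖L‖ * ‖v‖)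
      ≤ Real.exp (L x + ε' * ‖L‖) * ((ε - ε')⁻¹ * Real.exp ((ε - ε') * ‖L‖) * ‖v‖) := by gcongr
    _ = (ε - ε')⁻¹ * (Real.exp (L x + ε' * ‖L‖ + (ε - ε') * ‖L‖) * ‖v‖) := by
      rw [Real.exp_add (L x + _)]; ring
    _ = (ε - ε')⁻¹ * (Real.exp (L x + ε * ‖L‖) * ‖v‖) := by
      rw [add_assoc, ← add_mul, add_sub_cancel]

theorem aestronglyMeasurable_exp_smul (hφ : AEStronglyMeasurable φ μ)
    (hw : AEStronglyMeasurable w μ) (x : E) (ε : ℝ) :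
    AEStronglyMeasurable (fun y ↦ Real.exp (φ y x + ε * ‖φ y‖) • w y) μ :=
  (Real.continuous_exp.comp_aestronglyMeasurable
    ((hφ.apply_continuousLinearMap x).add (hφ.norm.const_mul ε))).smul hw

theorem aestronglyMeasurable_smulRight (hφ : AEStronglyMeasurable φ μ)
    (hw : AEStronglyMeasurable w μ) :
    AEStronglyMeasurable (fun y ↦ (φ y).smulRight (w y)) μ :=
  (ContinuousLinearMap.smulRightL ℝ E F).aestronglyMeasurable_comp₂ hφ hw

theorem integrable_exp_smul_of_dist_add_le (hφ : AEStronglyMeasurable φ μ)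
    (hw : AEStronglyMeasurable w μ) {x x' : E} {ε ε' : ℝ} (h : dist x' x + ε' ≤ ε)
    (hx : Integrable (fun y ↦ Real.exp (φ y x + ε * ‖φ y‖) • w y) μ) :
    Integrable (fun y ↦ Real.exp (φ y x' + ε' * ‖φ y‖) • w y) μ :=
  hx.mono (aestronglyMeasurable_exp_smul hφ hw x' ε')
    (.of_forall fun y ↦ norm_exp_smul_le_of_dist_add_le (φ y) (w y) h)

theorem integrable_exp_smul (hφ : AEStronglyMeasurable φ μ) (hw : AEStronglyMeasurable w μ)
    {x : E} (hx : x ∈ laplaceDomain μ φ w) : Integrable (fun y ↦ Real.exp (φ y x) • w y) μ := by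
  obtain ⟨ε, hε, hint⟩ := hx
  simpa using integrable_exp_smul_of_dist_add_le (x' := x) (ε' := 0) hφ hw (by simpa using hε.le)
    hint

theorem isOpen_laplaceDomain (hφ : AEStronglyMeasurable φ μ) (hw : AEStronglyMeasurable w μ) :
    IsOpen (laplaceDomain μ φ w) := by
  refine isOpen_iff.2 fun x ⟨ε, hε, hx⟩ ↦ ⟨ε / 2, half_pos hε, fun x' hx' ↦ ?_⟩
  exact ⟨ε / 2, half_pos hε,
    integrable_exp_smul_of_dist_add_le hφ hw (by linarith [mem_ball.1 hx']) hx⟩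

theorem laplaceDomain_subset_smulRight (hφ : AEStronglyMeasurable φ μ)
    (hw : AEStronglyMeasurable w μ) :
    laplaceDomain μ φ w ⊆ laplaceDomain μ φ fun y ↦ (φ y).smulRight (w y) := by
  rintro x ⟨ε, hε, hx⟩
  refine ⟨ε / 2, half_pos hε, (hx.norm.const_mul (ε - ε / 2)⁻¹).mono' ?_
    (.of_forall fun y ↦ norm_exp_smul_smulRight_le (φ y) (w y) x (half_lt_self hε))⟩
  exact aestronglyMeasurable_exp_smul hφ (aestronglyMeasurable_smulRight hφ hw) x _

theorem hasFDerivAt_laplaceIntegral (hφ : AEStronglyMeasurable φ μ)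
    (hw : AEStronglyMeasurable w μ) {x : E} (hx : x ∈ laplaceDomain μ φ w) :
    HasFDerivAt (laplaceIntegral μ φ w)
      (laplaceIntegral μ φ (fun y ↦ (φ y).smulRight (w y)) x) x := by
  have hw' := aestronglyMeasurable_smulRight hφ hw
  have hint := integrable_exp_smul hφ hw hx
  have hint' := integrable_exp_smul hφ hw' (laplaceDomain_subset_smulRight hφ hw hx)
  have hmeas : ∀ x', AEStronglyMeasurable (fun y ↦ Real.exp (φ y x') • w y) μ := fun x' ↦ by
    simpa using aestronglyMeasurable_exp_smul hφ hw x' 0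
  obtain ⟨ε, hε, hdom⟩ := hx
  refine hasFDerivAt_integral_of_dominated_of_fderiv_le
    (F' := fun x' y ↦ Real.exp (φ y x') • (φ y).smulRight (w y))
    (ball_mem_nhds x (half_pos hε)) (.of_forall hmeas) hint hint'.aestronglyMeasurable
    (.of_forall fun y x' hx' ↦ ?_) (hdom.norm.const_mul (ε - ε / 2)⁻¹)
    (.of_forall fun y x' _ ↦ ?_)
  · have hball : dist x' x + 0 ≤ ε / 2 := by simpa using (mem_ball.1 hx').le
    have h := norm_exp_smul_le_of_dist_add_le (φ y) ((φ y).smulRight (w y)) hball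
    rw [zero_mul, add_zero] at h
    exact h.trans (norm_exp_smul_smulRight_le (φ y) (w y) x (half_lt_self hε))
  · refine ((φ y).hasFDerivAt.exp.smul_const (w y)).congr_fderiv ?_
    ext v
    simp [mul_smul]

theorem integrable_exp_smul_apply_smul (hφ : AEStronglyMeasurable φ μ)
    (hw : AEStronglyMeasurable w μ) {x : E} (hx : x ∈ laplaceDomain μ φ w) (v : E) :
    Integrable (fun y ↦ Real.exp (φ y x) • φ y v • w y) μ :=
  (integrable_exp_smul hφ (aestronglyMeasurable_smulRight hφ hw)
    (laplaceDomain_subset_smulRight hφ hw hx)).apply_continuousLinearMap v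

theorem fderiv_laplaceIntegral_apply (hφ : AEStronglyMeasurable φ μ)
    (hw : AEStronglyMeasurable w μ) {x : E} (hx : x ∈ laplaceDomain μ φ w) (v : E) :
    fderiv ℝ (laplaceIntegral μ φ w) x v = ∫ y, Real.exp (φ y x) • φ y v • w y ∂μ := by
  rw [(hasFDerivAt_laplaceIntegral hφ hw hx).fderiv]
  exact ContinuousLinearMap.integral_apply (integrable_exp_smul hφ
    (aestronglyMeasurable_smulRight hφ hw) (laplaceDomain_subset_smulRight hφ hw hx)) v

end Laplace

section ContDiff

open scoped ContDiff

universe u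

variable {Y : Type*} [MeasurableSpace Y] {μ : Measure Y}
  {E F : Type u} [NormedAddCommGroup E] [NormedSpace ℝ E] [NormedAddCommGroup F] [NormedSpace ℝ F]
  {φ : Y → E →L[ℝ] ℝ} {w : Y → F}

theorem contDiffOn_laplaceIntegral_nat (hφ : AEStronglyMeasurable φ μ)
    (hw : AEStronglyMeasurable w μ) (n : ℕ) :
    ContDiffOn ℝ n (laplaceIntegral μ φ w) (laplaceDomain μ φ w) := by
  induction n generalizing F with
  | zero =>
    exact contDiffOn_zero.2 fun x hx ↦
      (hasFDerivAt_laplaceIntegral hφ hw hx).continuousAt.continuousWithinAt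
  | succ n ih =>
    rw [Nat.cast_add, Nat.cast_one,
      contDiffOn_succ_iff_fderiv_of_isOpen (isOpen_laplaceDomain hφ hw)]
    refine ⟨fun x hx ↦
      (hasFDerivAt_laplaceIntegral hφ hw hx).differentiableAt.differentiableWithinAt, by simp, ?_⟩
    exact ((ih (aestronglyMeasurable_smulRight hφ hw)).mono
      (laplaceDomain_subset_smulRight hφ hw)).congr
      fun x hx ↦ (hasFDerivAt_laplaceIntegral hφ hw hx).fderiv

theorem contDiffOn_laplaceIntegral (hφ : AEStronglyMeasurable φ μ)
    (hw : AEStronglyMeasurable w μ) :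
    ContDiffOn ℝ ∞ (laplaceIntegral μ φ w) (laplaceDomain μ φ w) :=
  contDiffOn_infty.2 (contDiffOn_laplaceIntegral_nat hφ hw)

end ContDiff

section TotalDerivative

variable {Y : Type*} [NormedAddCommGroup Y] [NormedSpace ℝ Y] [FiniteDimensional ℝ Y]
  [MeasurableSpace Y] [BorelSpace Y] {μ : Measure Y} [μ.IsAddHaarMeasure]
  {E F : Type*} [NormedAddCommGroup E] [NormedSpace ℝ E] [NormedAddCommGroup F] [NormedSpace ℝ F]

theorem integral_eq_zero_of_hasLineDerivAt {f f' : Y → F} {u : Y} (hf : Integrable f μ)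
    (hf' : Integrable f' μ) (hderiv : ∀ y, HasLineDerivAt ℝ f (f' y) y u) : ∫ y, f' y ∂μ = 0 := by
  have hone : ∀ y : Y, HasLineDerivAt ℝ (fun _ : Y ↦ (1 : ℝ)) 0 y u := fun y ↦ by
    simpa using (hasFDerivAt_const (1 : ℝ) y).hasLineDerivAt u
  simpa using integral_bilinear_hasLineDerivAt_right_eq_neg_left_of_integrable (μ := μ)
    (B := ContinuousLinearMap.lsmul ℝ ℝ) (by simp) (by simpa using hf') (by simpa using hf)
    (fun y _ ↦ hone y) (fun y _ ↦ hderiv y)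

/- The Schwinger–Dyson equation of `laplaceIntegral`: a total derivative in the integration
variable integrates to zero, and here it acts on the integrand as the derivative in the parameter
along `v`, up to the constant `c`. -/
theorem fderiv_laplaceIntegral_add_smul_eq_zero
    {φ : Y → E →L[ℝ] ℝ} {w : Y → F} (hφ : AEStronglyMeasurable φ μ)
    (hw : AEStronglyMeasurable w μ) {x v : E} (hx : x ∈ laplaceDomain μ φ w) {u : Y} {c : ℝ}
    (hderiv : ∀ y, HasLineDerivAt ℝ (fun y ↦ Real.exp (φ y x) • w y)
      (Real.exp (φ y x) • φ y v • w y + c • Real.exp (φ y x) • w y) y u) :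
    fderiv ℝ (laplaceIntegral μ φ w) x v + c • laplaceIntegral μ φ w x = 0 := by
  have hint := integrable_exp_smul hφ hw hx
  have hint' := integrable_exp_smul_apply_smul hφ hw hx v
  have hintc : Integrable (fun y ↦ c • Real.exp (φ y x) • w y) μ := hint.smul c
  rw [fderiv_laplaceIntegral_apply hφ hw hx, laplaceIntegral, ← integral_smul,
    ← integral_add hint' hintc]
  exact integral_eq_zero_of_hasLineDerivAt hint (hint'.add hintc) hderiv

end TotalDerivative

section Estimates

open Asymptotics Filter

theorem exists_forall_le_mul_pow_add {f : ℝ → ℝ} (hf : Continuous f) {n : ℕ}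
    (ho : f =o[atTop] fun r ↦ r ^ n) {δ : ℝ} (hδ : 0 < δ) :
    ∃ C, ∀ r, 0 ≤ r → f r ≤ δ * r ^ n + C := by
  obtain ⟨R, hR⟩ := eventually_atTop.1 (ho.bound hδ)
  obtain ⟨C, hC⟩ := (isCompact_Icc (a := 0) (b := R)).bddAbove_image hf.continuousOn
  refine ⟨max C 0, fun r hr ↦ ?_⟩
  have hpow : 0 ≤ δ * r ^ n := by positivity
  rcases le_total r R with hrR | hRr
  · linarith [hC (Set.mem_image_of_mem f ⟨hr, hrR⟩), le_max_left C 0]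
  · have h := hR r hRr
    rw [Real.norm_eq_abs, Real.norm_of_nonneg (by positivity)] at h
    linarith [le_abs_self (f r), le_max_right C 0]

theorem integrable_prod_exp_sub_sq {ι : Type*} [Fintype ι] (C : ℝ) :
    Integrable fun x : ι → ℝ ↦ ∏ a, Real.exp (C - x a ^ 2) := by
  have hone : Integrable fun r : ℝ ↦ Real.exp (C - r ^ 2) := by
    simpa [sub_eq_add_neg, Real.exp_add] using
      (integrable_exp_neg_mul_sq one_pos).const_mul (Real.exp C)
  exact Integrable.fintype_prod (μ := fun _ ↦ volume) fun _ ↦ hone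

end Estimates

section Vandermonde

variable {N : ℕ}

theorem continuous_vdm : Continuous (vdm (N := N)) := by
  unfold vdm
  fun_prop

theorem vdm_add_smul_one (l : Fin N → ℝ) (e : ℝ) : vdm (l + e • 1) = vdm l := by
  simp [vdm]

theorem abs_vdm_le (l : Fin N → ℝ) : |vdm l| ≤ Real.exp (∑ a, 2 * N * |l a|) := by
  have hfactor : ∀ i j, |l j - l i| ≤ Real.exp (|l j| + |l i|) := fun i j ↦
    (abs_sub _ _).trans (by linarith [Real.add_one_le_exp (|l j| + |l i|)])
  calc |vdm l| = ∏ i, ∏ j ∈ Finset.Ioi i, |l j - l i| := by simp only [vdm, Finset.abs_prod]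
    _ ≤ ∏ i, ∏ j ∈ Finset.Ioi i, Real.exp (|l j| + |l i|) := by gcongr; exact hfactor _ _
    _ = Real.exp (∑ i, ∑ j ∈ Finset.Ioi i, (|l j| + |l i|)) := by simp only [Real.exp_sum]
    _ ≤ Real.exp (∑ i, ∑ j, (|l j| + |l i|)) := by
      gcongr
      exact Finset.subset_univ _
    _ = Real.exp (∑ a, 2 * N * |l a|) := by
      congr 1
      simp only [Finset.sum_add_distrib, Finset.sum_const, Finset.card_univ, Fintype.card_fin,
        nsmul_eq_mul, ← Finset.mul_sum]
      ring

end Vandermonde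

section Potential

open Asymptotics Filter

/-- The evaluation at `x` of the potential `∑ k, t k * x ^ (k + 1)`, as a continuous linear
functional of its couplings `t`. The coupling paired with `x ^ k` has index `k - 1`. -/
noncomputable def potentialCLM (p : ℕ) (x : ℝ) : (Fin p → ℝ) →L[ℝ] ℝ :=
  ∑ k : Fin p, x ^ ((k : ℕ) + 1) • ContinuousLinearMap.proj k

theorem potentialCLM_apply {p : ℕ} (x : ℝ) (t : Fin p → ℝ) :
    potentialCLM p x t = ∑ k : Fin p, t k * x ^ ((k : ℕ) + 1) := by
  simp [potentialCLM, mul_comm]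

theorem potentialCLM_single {p : ℕ} (x : ℝ) (k : Fin p) :
    potentialCLM p x (Pi.single k 1) = x ^ ((k : ℕ) + 1) := by
  simp [potentialCLM_apply, Pi.single_apply]

theorem continuous_potentialCLM (p : ℕ) : Continuous (potentialCLM p) := by
  unfold potentialCLM
  fun_prop

theorem norm_potentialCLM_le (p : ℕ) (x : ℝ) :
    ‖potentialCLM p x‖ ≤ ∑ k : Fin p, |x| ^ ((k : ℕ) + 1) := by
  refine ContinuousLinearMap.opNorm_le_bound _ (by positivity) fun t ↦ ?_
  rw [potentialCLM_apply, Finset.sum_mul]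
  refine (Finset.abs_sum_le_sum_abs _ _).trans (Finset.sum_le_sum fun k _ ↦ ?_)
  rw [abs_mul, abs_pow, mul_comm]
  gcongr
  exact norm_le_pi_norm t k

theorem potentialCLM_add_norm_le {n : ℕ} (t : Fin (n + 1) → ℝ) (hn : Even (n + 1)) {ε : ℝ}
    (hε : 0 ≤ ε) (x : ℝ) :
    potentialCLM (n + 1) x t + ε * ‖potentialCLM (n + 1) x‖ ≤
      ∑ k : Fin n, (|t k.castSucc| + ε) * |x| ^ ((k : ℕ) + 1) +
        (t (Fin.last n) + ε) * |x| ^ (n + 1) := by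
  have hterm : ∀ k : Fin n, t k.castSucc * x ^ ((k : ℕ) + 1) ≤
      |t k.castSucc| * |x| ^ ((k : ℕ) + 1) := fun k ↦ by
    rw [← abs_pow, ← abs_mul]
    exact le_abs_self _
  have hpot : potentialCLM (n + 1) x t ≤
      ∑ k : Fin n, |t k.castSucc| * |x| ^ ((k : ℕ) + 1) + t (Fin.last n) * |x| ^ (n + 1) := by
    rw [potentialCLM_apply, Fin.sum_univ_castSucc, Fin.val_last, hn.pow_abs]
    exact add_le_add (Finset.sum_le_sum fun k _ ↦ hterm k) le_rfl
  have hnorm := mul_le_mul_of_nonneg_left (norm_potentialCLM_le (n + 1) x) hε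
  rw [Fin.sum_univ_castSucc, Fin.val_last, mul_add, Finset.mul_sum] at hnorm
  simp only [Fin.val_castSucc] at hnorm
  simp only [add_mul, Finset.sum_add_distrib]
  linarith

theorem exists_potentialCLM_add_norm_le {n : ℕ} (h2 : 2 < n + 1) (hn : Even (n + 1))
    {t : Fin (n + 1) → ℝ} {ε : ℝ} (hε : 0 ≤ ε) (ht : t (Fin.last n) + ε < 0) (c K : ℝ) :
    ∃ C, ∀ x : ℝ, potentialCLM (n + 1) x t + ε * ‖potentialCLM (n + 1) x‖ ≤
      C - c * |x| - K * x ^ 2 := by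
  let lower : ℝ → ℝ := fun r ↦
    ∑ k : Fin n, (|t k.castSucc| + ε) * r ^ ((k : ℕ) + 1) + c * r ^ 1 + K * r ^ 2
  have hlower : lower =o[atTop] fun r ↦ r ^ (n + 1) :=
    ((IsLittleO.fun_sum fun k _ ↦ (isLittleO_pow_pow_atTop_of_lt (by lia)).const_mul_left _).add
      ((isLittleO_pow_pow_atTop_of_lt (by lia)).const_mul_left c)).add
      ((isLittleO_pow_pow_atTop_of_lt h2).const_mul_left K)
  obtain ⟨C, hC⟩ := exists_forall_le_mul_pow_add (by fun_prop) hlower (neg_pos.2 ht)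
  refine ⟨C, fun x ↦ ?_⟩
  have h := hC |x| (abs_nonneg x)
  simp only [lower, pow_one, sq_abs] at h
  linarith [potentialCLM_add_norm_le t hn hε x]

/-- The couplings of `V' - V' 0`, where `V` is the potential with couplings `t`: the summand of
index `s` comes from the monomial `t s * x ^ (s + 1)` of `V`. -/
noncomputable def derivCouplings {q : ℕ} (t : Fin q → ℝ) : Fin q → ℝ :=
  ∑ s ∈ Finset.univ.filter (fun s : Fin q ↦ (s : ℕ) ≠ 0),
    (((s : ℕ) + 1 : ℝ) * t s) • Pi.single ⟨(s : ℕ) - 1, lt_of_le_of_lt (Nat.sub_le _ _) s.isLt⟩ 1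

theorem potentialCLM_derivCouplings {n : ℕ} (t : Fin (n + 1) → ℝ) (x : ℝ) :
    potentialCLM (n + 1) x (derivCouplings t) + t 0 =
      ∑ s : Fin (n + 1), t s * (((s : ℕ) + 1 : ℝ) * x ^ (s : ℕ)) := by
  rw [derivCouplings, map_sum, Finset.sum_filter, Fin.sum_univ_succ, Fin.sum_univ_succ]
  simp [potentialCLM_single, mul_comm, mul_left_comm, add_comm]

theorem hasDerivAt_potentialCLM {n : ℕ} (t : Fin (n + 1) → ℝ) (x : ℝ) :
    HasDerivAt (fun x ↦ potentialCLM (n + 1) x t)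
      (potentialCLM (n + 1) x (derivCouplings t) + t 0) x := by
  simp only [potentialCLM_derivCouplings, potentialCLM_apply _ t]
  refine HasDerivAt.fun_sum fun s _ ↦ ?_
  simpa using (hasDerivAt_pow ((s : ℕ) + 1) x).const_mul (t s)

end Potential

section TwoMatrixModel

variable {N p q : ℕ}

/-- The factors of the integrand of `Z_N` that do not involve the couplings `t` and `t̃`: the two
Vandermonde products and the interaction. -/
noncomputable def interactionWeight (g : ℝ) (y : (Fin N → ℝ) × (Fin N → ℝ)) : ℝ :=
  vdm y.1 * vdm y.2 * Real.exp (∑ a, g * y.1 a * y.2 a)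

/-- The total potential `∑ a, (V (λ_a) + Ṽ (μ_a))` at the eigenvalues `y = (λ, μ)`, as a continuous
linear functional of the pair of couplings of `V` and `Ṽ`. -/
noncomputable def totalPotentialCLM (N p q : ℕ) (y : (Fin N → ℝ) × (Fin N → ℝ)) :
    (Fin p → ℝ) × (Fin q → ℝ) →L[ℝ] ℝ :=
  ∑ a, (potentialCLM p (y.1 a)).coprod (potentialCLM q (y.2 a))

/-- The partition function `Z_N` of the two-matrix model, at the pair of couplings `x = (t, t̃)`. -/
noncomputable def partitionFunction (N : ℕ) (g : ℝ) (x : (Fin p → ℝ) × (Fin q → ℝ)) : ℝ :=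
  (1 / (N.factorial : ℝ)) *
    ∫ lam : Fin N → ℝ, ∫ mu : Fin N → ℝ,
      vdm lam * vdm mu *
        ∏ a : Fin N, Real.exp
          ((∑ k : Fin p, x.1 k * lam a ^ ((k : ℕ) + 1)) +
           (∑ s : Fin q, x.2 s * mu a ^ ((s : ℕ) + 1)) + g * lam a * mu a)

theorem totalPotentialCLM_apply (y : (Fin N → ℝ) × (Fin N → ℝ)) (x : (Fin p → ℝ) × (Fin q → ℝ)) :
    totalPotentialCLM N p q y x =
      ∑ a, (potentialCLM p (y.1 a) x.1 + potentialCLM q (y.2 a) x.2) := by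
  simp [totalPotentialCLM]

theorem continuous_interactionWeight (g : ℝ) : Continuous (interactionWeight (N := N) g) := by
  have := continuous_vdm (N := N)
  unfold interactionWeight
  fun_prop

theorem continuous_totalPotentialCLM : Continuous (totalPotentialCLM N p q) := by
  have := continuous_potentialCLM p
  have := continuous_potentialCLM q
  unfold totalPotentialCLM
  fun_prop

theorem norm_totalPotentialCLM_le (y : (Fin N → ℝ) × (Fin N → ℝ)) :
    ‖totalPotentialCLM N p q y‖ ≤ ∑ a, (‖potentialCLM p (y.1 a)‖ + ‖potentialCLM q (y.2 a)‖) := by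
  refine norm_sum_le_of_le _ fun a _ ↦ ContinuousLinearMap.opNorm_le_bound _ (by positivity) ?_
  intro x
  rw [ContinuousLinearMap.coprod_apply, add_mul]
  exact (norm_add_le _ _).trans (add_le_add
    (ContinuousLinearMap.le_opNorm_of_le _ (norm_fst_le x))
    (ContinuousLinearMap.le_opNorm_of_le _ (norm_snd_le x)))

theorem exp_smul_interactionWeight (g : ℝ) (x : (Fin p → ℝ) × (Fin q → ℝ))
    (y : (Fin N → ℝ) × (Fin N → ℝ)) :
    Real.exp (totalPotentialCLM N p q y x) • interactionWeight g y =
      vdm y.1 * vdm y.2 *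
        Real.exp (totalPotentialCLM N p q y x + ∑ a, g * y.1 a * y.2 a) := by
  rw [interactionWeight, smul_eq_mul, mul_left_comm, Real.exp_add]

theorem mul_mul_le_abs_div_two (g x y : ℝ) : g * x * y ≤ |g| / 2 * (x ^ 2 + y ^ 2) := by
  calc g * x * y ≤ |g| * (|x| * |y|) := by
        rw [← abs_mul, ← abs_mul, ← mul_assoc]
        exact le_abs_self _
    _ ≤ |g| * ((x ^ 2 + y ^ 2) / 2) := by
        gcongr
        linarith [two_mul_le_add_sq |x| |y|, sq_abs x, sq_abs y]
    _ = |g| / 2 * (x ^ 2 + y ^ 2) := by ring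

theorem norm_interactionWeight_le (g : ℝ) (y : (Fin N → ℝ) × (Fin N → ℝ)) :
    ‖interactionWeight g y‖ ≤ Real.exp (∑ a, (2 * N * |y.1 a| + |g| / 2 * y.1 a ^ 2)) *
      Real.exp (∑ a, (2 * N * |y.2 a| + |g| / 2 * y.2 a ^ 2)) := by
  have hsum : ∑ a, g * y.1 a * y.2 a ≤
      ∑ a, |g| / 2 * y.1 a ^ 2 + ∑ a, |g| / 2 * y.2 a ^ 2 := by
    rw [← Finset.sum_add_distrib]
    exact Finset.sum_le_sum fun a _ ↦ (mul_mul_le_abs_div_two g _ _).trans_eq (mul_add _ _ _)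
  calc ‖interactionWeight g y‖
      = |vdm y.1| * |vdm y.2| * Real.exp (∑ a, g * y.1 a * y.2 a) := by
        simp [interactionWeight]
    _ ≤ Real.exp (∑ a, 2 * N * |y.1 a|) * Real.exp (∑ a, 2 * N * |y.2 a|) *
          Real.exp (∑ a, |g| / 2 * y.1 a ^ 2 + ∑ a, |g| / 2 * y.2 a ^ 2) := by
        gcongr <;> exact abs_vdm_le _
    _ = _ := by
        simp only [← Real.exp_add, Finset.sum_add_distrib]
        ring_nf

theorem norm_exp_totalPotentialCLM_smul_le {g ε C₁ C₂ : ℝ} (hε : 0 ≤ ε)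
    {x : (Fin p → ℝ) × (Fin q → ℝ)}
    (h₁ : ∀ r, potentialCLM p r x.1 + ε * ‖potentialCLM p r‖ ≤
      C₁ - 2 * N * |r| - (|g| / 2 + 1) * r ^ 2)
    (h₂ : ∀ r, potentialCLM q r x.2 + ε * ‖potentialCLM q r‖ ≤
      C₂ - 2 * N * |r| - (|g| / 2 + 1) * r ^ 2) (y : (Fin N → ℝ) × (Fin N → ℝ)) :
    ‖Real.exp (totalPotentialCLM N p q y x + ε * ‖totalPotentialCLM N p q y‖) •
        interactionWeight g y‖ ≤
      (∏ a, Real.exp (C₁ - y.1 a ^ 2)) * ∏ a, Real.exp (C₂ - y.2 a ^ 2) := by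
  have hpot : totalPotentialCLM N p q y x + ε * ‖totalPotentialCLM N p q y‖ ≤
      ∑ a, ((C₁ - 2 * N * |y.1 a| - (|g| / 2 + 1) * y.1 a ^ 2) +
        (C₂ - 2 * N * |y.2 a| - (|g| / 2 + 1) * y.2 a ^ 2)) := by
    have hop := mul_le_mul_of_nonneg_left (norm_totalPotentialCLM_le (p := p) (q := q) y) hε
    refine (add_le_add (totalPotentialCLM_apply y x).le hop).trans ?_
    rw [Finset.mul_sum, ← Finset.sum_add_distrib]
    exact Finset.sum_le_sum fun a _ ↦ by linarith [h₁ (y.1 a), h₂ (y.2 a)]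
  rw [norm_smul, Real.norm_eq_abs, Real.abs_exp]
  refine (mul_le_mul (Real.exp_le_exp.2 hpot) (norm_interactionWeight_le g y) (norm_nonneg _)
    (Real.exp_nonneg _)).trans_eq ?_
  simp only [← Real.exp_sum, ← Real.exp_add, ← Finset.sum_add_distrib]
  congr 1
  exact Finset.sum_congr rfl fun a _ ↦ by ring

theorem mem_laplaceDomain_of_last_neg {m n : ℕ} (hm2 : 2 < m + 1) (hm : Even (m + 1))
    (hn2 : 2 < n + 1) (hn : Even (n + 1)) (g : ℝ) {x : (Fin (m + 1) → ℝ) × (Fin (n + 1) → ℝ)}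
    (hx₁ : x.1 (Fin.last m) < 0) (hx₂ : x.2 (Fin.last n) < 0) :
    x ∈ laplaceDomain volume (totalPotentialCLM N (m + 1) (n + 1)) (interactionWeight g) := by
  obtain ⟨ε, hε, hεx⟩ := exists_between (lt_min (neg_pos.2 hx₁) (neg_pos.2 hx₂))
  obtain ⟨hε₁, hε₂⟩ := lt_min_iff.1 hεx
  obtain ⟨C₁, h₁⟩ := exists_potentialCLM_add_norm_le hm2 hm hε.le
    (lt_neg_iff_add_neg'.1 hε₁) (2 * N) (|g| / 2 + 1)
  obtain ⟨C₂, h₂⟩ := exists_potentialCLM_add_norm_le hn2 hn hε.le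
    (lt_neg_iff_add_neg'.1 hε₂) (2 * N) (|g| / 2 + 1)
  refine ⟨ε, hε, ((integrable_prod_exp_sub_sq C₁).mul_prod
    (integrable_prod_exp_sub_sq C₂)).mono' ?_
    (.of_forall (norm_exp_totalPotentialCLM_smul_le hε.le h₁ h₂))⟩
  exact aestronglyMeasurable_exp_smul continuous_totalPotentialCLM.aestronglyMeasurable
    (continuous_interactionWeight g).aestronglyMeasurable x ε

theorem partitionFunction_eqOn_laplaceIntegral (g : ℝ) :
    Set.EqOn (partitionFunction N g)
      (fun x ↦ (1 / (N.factorial : ℝ)) •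
        laplaceIntegral volume (totalPotentialCLM N p q) (interactionWeight g) x)
      (laplaceDomain volume (totalPotentialCLM N p q) (interactionWeight g)) := by
  intro x hx
  have hint := integrable_exp_smul continuous_totalPotentialCLM.aestronglyMeasurable
    (continuous_interactionWeight g).aestronglyMeasurable hx
  rw [Measure.volume_eq_prod] at hint
  beta_reduce
  rw [partitionFunction, laplaceIntegral, Measure.volume_eq_prod, integral_prod _ hint, smul_eq_mul]
  simp only [exp_smul_interactionWeight]
  simp only [totalPotentialCLM_apply, potentialCLM_apply, ← Finset.sum_add_distrib, Real.exp_sum]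

theorem contDiffOn_partitionFunction (g : ℝ) :
    ContDiffOn ℝ (⊤ : ℕ∞) (partitionFunction (p := p) (q := q) N g)
      (laplaceDomain volume (totalPotentialCLM N p q) (interactionWeight g)) :=
  ((contDiffOn_laplaceIntegral continuous_totalPotentialCLM.aestronglyMeasurable
    (continuous_interactionWeight g).aestronglyMeasurable).const_smul _).congr
    (partitionFunction_eqOn_laplaceIntegral g)

/-- The direction of the derivative in the string equation, as a vector of the space of pairs of
couplings: `g ∂/∂t_1 + ∑_{s ≥ 2} s t̃_s ∂/∂t̃_{s-1}`. -/
noncomputable def stringDirection {m : ℕ} (g : ℝ) (tt : Fin q → ℝ) :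
    (Fin (m + 1) → ℝ) × (Fin q → ℝ) :=
  (g • Pi.single 0 1, derivCouplings tt)

theorem map_stringDirection {m : ℕ} (g : ℝ) (tt : Fin q → ℝ)
    (L : (Fin (m + 1) → ℝ) × (Fin q → ℝ) →L[ℝ] ℝ) :
    L (stringDirection g tt) =
      (∑ s ∈ Finset.univ.filter (fun s : Fin q ↦ (s : ℕ) ≠ 0), ((s : ℕ) + 1 : ℝ) * tt s *
        L (0, Pi.single ⟨(s : ℕ) - 1, lt_of_le_of_lt (Nat.sub_le _ _) s.isLt⟩ 1)) +
      g * L (Pi.single 0 1, 0) := by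
  have hinr : L (0, derivCouplings tt) = (L.comp (.inr ℝ _ _)) (derivCouplings tt) := rfl
  have hsplit : stringDirection (m := m) g tt =
      (0, derivCouplings tt) + g • (Pi.single 0 1, 0) := by simp [stringDirection]
  rw [hsplit, map_add, map_smul, hinr, derivCouplings, map_sum]
  simp only [map_smul, smul_eq_mul, ContinuousLinearMap.comp_apply, ContinuousLinearMap.inr_apply]

theorem totalPotentialCLM_stringDirection {m n : ℕ} (g : ℝ) (tt : Fin (n + 1) → ℝ)
    (y : (Fin N → ℝ) × (Fin N → ℝ)) :
    totalPotentialCLM N (m + 1) (n + 1) y (stringDirection g tt) + N * tt 0 =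
      ∑ a, (potentialCLM (n + 1) (y.2 a) (derivCouplings tt) + tt 0 + g * y.1 a) := by
  simp only [totalPotentialCLM_apply, stringDirection, map_smul, potentialCLM_single,
    Finset.sum_add_distrib, Finset.sum_const, Finset.card_univ, Fintype.card_fin, nsmul_eq_mul,
    smul_eq_mul, Fin.val_zero, zero_add, pow_one]
  ring

theorem hasLineDerivAt_totalPotentialCLM_add {m n : ℕ} (g : ℝ)
    (x : (Fin (m + 1) → ℝ) × (Fin (n + 1) → ℝ)) (y : (Fin N → ℝ) × (Fin N → ℝ)) :
    HasLineDerivAt ℝ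
      (fun y ↦ totalPotentialCLM N (m + 1) (n + 1) y x + ∑ a, g * y.1 a * y.2 a)
      (totalPotentialCLM N (m + 1) (n + 1) y (stringDirection g x.2) + N * x.2 0) y (0, 1) := by
  have hshift : ∀ a, HasDerivAt (fun e : ℝ ↦ y.2 a + e) 1 0 := fun a ↦
    (hasDerivAt_id 0).const_add _
  rw [totalPotentialCLM_stringDirection]
  simp only [HasLineDerivAt, totalPotentialCLM_apply, ← Finset.sum_add_distrib, Prod.fst_add,
    Prod.snd_add, Prod.smul_fst, Prod.smul_snd, smul_zero, Pi.add_apply, Pi.smul_apply,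
    Pi.one_apply, smul_eq_mul, mul_one]
  refine HasDerivAt.fun_sum fun a _ ↦ HasDerivAt.add ?_ ?_
  · have h : HasDerivAt (fun r ↦ potentialCLM (n + 1) r x.2)
      (potentialCLM (n + 1) (y.2 a) (derivCouplings x.2) + x.2 0) (y.2 a + 0) := by
      simpa using hasDerivAt_potentialCLM x.2 (y.2 a)
    simpa using (h.comp 0 (hshift a)).const_add (potentialCLM (m + 1) (y.1 a) x.1)
  · simpa using (hshift a).const_mul (g * y.1 a)

theorem hasLineDerivAt_exp_smul_interactionWeight {m n : ℕ} (g : ℝ)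
    (x : (Fin (m + 1) → ℝ) × (Fin (n + 1) → ℝ)) (y : (Fin N → ℝ) × (Fin N → ℝ)) :
    let φ := totalPotentialCLM N (m + 1) (n + 1)
    HasLineDerivAt ℝ (fun y ↦ Real.exp (φ y x) • interactionWeight g y)
      (Real.exp (φ y x) • φ y (stringDirection g x.2) • interactionWeight g y +
        (N * x.2 0) • Real.exp (φ y x) • interactionWeight g y) y (0, 1) := by
  intro φ
  have hvdm : ∀ e : ℝ, vdm (y + e • (0, 1)).1 * vdm (y + e • (0, 1)).2 = vdm y.1 * vdm y.2 :=
    fun e ↦ by simp [vdm_add_smul_one]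
  have hexp := (HasDerivAt.exp (hasLineDerivAt_totalPotentialCLM_add g x y)).const_mul
    (vdm y.1 * vdm y.2)
  rw [smul_comm (Real.exp (φ y x))]
  simp only [HasLineDerivAt, φ, exp_smul_interactionWeight, hvdm]
  refine hexp.congr_deriv ?_
  simp only [zero_smul, add_zero, smul_eq_mul]
  ring

theorem fderiv_partitionFunction_stringDirection {m n : ℕ} (g : ℝ)
    {x : (Fin (m + 1) → ℝ) × (Fin (n + 1) → ℝ)}
    (hx : x ∈ laplaceDomain volume (totalPotentialCLM N (m + 1) (n + 1)) (interactionWeight g)) :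
    fderiv ℝ (partitionFunction N g) x (stringDirection g x.2) +
      N * x.2 0 * partitionFunction N g x = 0 := by
  have hφ := (continuous_totalPotentialCLM (N := N) (p := m + 1)
    (q := n + 1)).aestronglyMeasurable (μ := volume)
  have hw := (continuous_interactionWeight (N := N) g).aestronglyMeasurable (μ := volume)
  have heq := partitionFunction_eqOn_laplaceIntegral (N := N) (p := m + 1) (q := n + 1) g
  have : (volume : Measure ((Fin N → ℝ) × (Fin N → ℝ))).IsAddHaarMeasure :=
    Measure.prod.instIsAddHaarMeasure _ _
  have hSD := fderiv_laplaceIntegral_add_smul_eq_zero hφ hw hx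
    (hasLineDerivAt_exp_smul_interactionWeight g x)
  rw [(heq.eventuallyEq_of_mem ((isOpen_laplaceDomain hφ hw).mem_nhds hx)).fderiv_eq, heq hx,
    fderiv_fun_const_smul (hasFDerivAt_laplaceIntegral hφ hw hx).differentiableAt,
    smul_apply, mul_smul_comm, ← smul_add, ← smul_eq_mul (N * x.2 0), hSD,
    smul_zero]

end TwoMatrixModel

theorem stmt18 (N p q : ℕ) (hN : 1 ≤ N) (hp : 4 ≤ p) (hpe : Even p)
    (hq : 4 ≤ q) (hqe : Even q) (g : ℝ)
    (Z : (Fin p → ℝ) × (Fin q → ℝ) → ℝ)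
    (hZ : ∀ t : Fin p → ℝ, ∀ tt : Fin q → ℝ,
      Z (t, tt) = (1 / (N.factorial : ℝ)) *
        ∫ lam : Fin N → ℝ, ∫ mu : Fin N → ℝ,
          vdm lam * vdm mu *
            ∏ a : Fin N, Real.exp
              ((∑ k : Fin p, t k * lam a ^ ((k : ℕ) + 1)) +
               (∑ s : Fin q, tt s * mu a ^ ((s : ℕ) + 1)) + g * lam a * mu a)) :
    ContDiffOn ℝ (⊤ : ℕ∞) Z { pt : (Fin p → ℝ) × (Fin q → ℝ) |
        pt.1 ⟨p - 1, by omega⟩ < 0 ∧ pt.2 ⟨q - 1, by omega⟩ < 0 } ∧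
    ∀ t : Fin p → ℝ, ∀ tt : Fin q → ℝ,
      t ⟨p - 1, by omega⟩ < 0 → tt ⟨q - 1, by omega⟩ < 0 →
      (∑ s ∈ Finset.univ.filter (fun s : Fin q => (s : ℕ) ≠ 0),
          ((s : ℕ) + 1 : ℝ) * tt s *
            fderiv ℝ Z (t, tt)
              (0, Pi.single ⟨(s : ℕ) - 1, lt_of_le_of_lt (Nat.sub_le _ _) s.isLt⟩ 1)) +
        g * fderiv ℝ Z (t, tt) (Pi.single ⟨0, by omega⟩ 1, 0) +
        (N : ℝ) * tt ⟨0, by omega⟩ * Z (t, tt) = 0 := by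
  obtain ⟨m, rfl⟩ := Nat.exists_eq_add_of_le' (by lia : 1 ≤ p)
  obtain ⟨n, rfl⟩ := Nat.exists_eq_add_of_le' (by lia : 1 ≤ q)
  obtain rfl : Z = partitionFunction N g := funext fun x ↦ hZ x.1 x.2
  have hdom : ∀ x : (Fin (m + 1) → ℝ) × (Fin (n + 1) → ℝ),
      x.1 (Fin.last m) < 0 → x.2 (Fin.last n) < 0 →
      x ∈ laplaceDomain volume (totalPotentialCLM N (m + 1) (n + 1)) (interactionWeight g) :=
    fun _ ↦ mem_laplaceDomain_of_last_neg (by lia) hpe (by lia) hqe g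
  refine ⟨(contDiffOn_partitionFunction g).mono fun x hx ↦ hdom x hx.1 hx.2, fun t tt ht htt ↦ ?_⟩
  have hstring := fderiv_partitionFunction_stringDirection g (hdom (t, tt) ht htt)
  rwa [map_stringDirection] at hstring
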